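/- A generalised clause-set F is matching lean with δ(F) = 1 if and only if F is minimally matching unsatisfiable, i.e., F is not matching satisfiable while every proper subset of F is matching satisfiable. -/

import Mathlib

set_option linter.unusedSectionVars false
set_option linter.unusedVariables false

open scoped Classical

namespace GCLS

variable {V α : Type} [DecidableEq V] [DecidableEq α]

/-- A finite "functional" set of (variable, value) pairs, with values inside the
given domains `D`; used both for clauses and for partial assignments. -/
def FinFn (D : V → Finset α) : Type :=
  { s : Finset (V × α) // (∀ p ∈ s, p.2 ∈ D p.1) ∧
      ∀ p ∈ s, ∀ q ∈ s, p.1 = q.1 → p = q }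

variable {D : V → Finset α}

instance : DecidableEq (FinFn D) :=
  fun a b => decidable_of_iff (a.1 = b.1) Subtype.ext_iff.symm

namespace FinFn

/-- The set of variables occurring. -/
def vars (s : FinFn D) : Finset V := s.1.image Prod.fst

/-- Restriction to the pairs whose variable lies in `W`. -/
def restrictVars (s : FinFn D) (W : Finset V) : FinFn D :=
  ⟨s.1.filter (fun p => p.1 ∈ W),
   fun p hp => s.2.1 p (Finset.mem_filter.mp hp).1,
   fun p hp q hq h =>
     s.2.2 p (Finset.mem_filter.mp hp).1 q (Finset.mem_filter.mp hq).1 h⟩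

/-- Removal of a set of pairs. -/
def sdiff (s : FinFn D) (t : Finset (V × α)) : FinFn D :=
  ⟨s.1 \ t,
   fun p hp => s.2.1 p (Finset.mem_sdiff.mp hp).1,
   fun p hp q hq h =>
     s.2.2 p (Finset.mem_sdiff.mp hp).1 q (Finset.mem_sdiff.mp hq).1 h⟩

end FinFn

/-- Clauses: finite sets of literals `(v,ε)` (meaning "v ≠ ε"), at most one literal
per variable, values inside the domains. -/
abbrev Clause (D : V → Finset α) := FinFn D

/-- Partial assignments: finitely many variables get values inside their domains. -/
abbrev PAssign (D : V → Finset α) := FinFn D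

/-- `φ` satisfies the literal `(v,ε)` (i.e. "v ≠ ε"): `v` is assigned a value ≠ `ε`. -/
def SatLit (φ : PAssign D) (l : V × α) : Prop :=
  ∃ ε, (l.1, ε) ∈ φ.1 ∧ ε ≠ l.2

/-- `φ` satisfies a clause iff it satisfies some literal of it. -/
def SatClause (φ : PAssign D) (C : Clause D) : Prop :=
  ∃ l ∈ C.1, SatLit φ l

/-- The clause obtained from `C` by deleting all literals falsified by `φ`. -/
def Clause.restrict (φ : PAssign D) (C : Clause D) : Clause D :=
  FinFn.sdiff C φ.1

/-- The operation `φ * F` on multi-clause-sets: remove all clauses satisfied by `φ`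
and delete all falsified literals from the remaining clauses. -/
noncomputable def applyM (φ : PAssign D) (F : Multiset (Clause D)) : Multiset (Clause D) :=
  (F.filter (fun C => ¬ SatClause φ C)).map (Clause.restrict φ)

/-- The operation `φ * F` on clause-sets (with contraction of equal clauses). -/
noncomputable def applyF (φ : PAssign D) (F : Finset (Clause D)) : Finset (Clause D) :=
  (F.filter (fun C => ¬ SatClause φ C)).image (Clause.restrict φ)

/-- Satisfiability: some partial assignment satisfies all clauses. -/
def Sat (F : Multiset (Clause D)) : Prop :=
  ∃ φ : PAssign D, applyM φ F = 0

/-- Minimal unsatisfiability of a clause-set. -/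
def MinUnsat (F : Finset (Clause D)) : Prop :=
  ¬ Sat F.val ∧ ∀ F' ⊂ F, Sat F'.val

/-- The variables of a multi-clause-set. -/
def mvars (F : Multiset (Clause D)) : Finset V := F.toFinset.sup FinFn.vars

/-- The deficiency `δ(F) = c(F) - Σ_{v ∈ var(F)} (|D_v| - 1)`. -/
def delta (F : Multiset (Clause D)) : ℤ :=
  (Multiset.card F : ℤ) - ∑ v ∈ mvars F, ((D v).card - 1 : ℤ)

lemma powerset_toFinset_nonempty (F : Multiset (Clause D)) :
    F.powerset.toFinset.Nonempty :=
  ⟨0, by simp⟩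

/-- The maximal deficiency `δ*(F) = max {δ(F') : F' ≤ F}`. -/
noncomputable def deltaStar (F : Multiset (Clause D)) : ℤ :=
  F.powerset.toFinset.sup' (powerset_toFinset_nonempty F) delta

/-- A tight sub-multi-clause-set: `F' ≤ F` with `δ(F') = δ*(F)`. -/
noncomputable def Tight (F F' : Multiset (Clause D)) : Prop :=
  F' ≤ F ∧ delta F' = deltaStar F

/-- `F` is matching satisfiable: the clause-variable graph `B(F)` has a matching
covering all clause-nodes.  Such a matching is encoded as a multiset `P` of pairs
(clause-occurrence, variable-node), where the variable-nodes `(v,k)`,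
`k < |D v| - 1`, are the copies of the variable `v`; the matching covers each
clause-occurrence exactly once (`P.map Prod.fst = F`), uses pairwise distinct
variable-nodes, and respects adjacency in `B(F)`. -/
def MatchingSat (F : Multiset (Clause D)) : Prop :=
  ∃ P : Multiset (Clause D × (V × ℕ)),
    P.map Prod.fst = F ∧ (P.map Prod.snd).Nodup ∧
    ∀ p ∈ P, p.2.1 ∈ FinFn.vars p.1 ∧ p.2.2 < (D p.2.1).card - 1

/-- The edge between clause `C` and the copies of variable `v` is retained in
`B_φ(F)`: the literal of `C` with variable `v` is satisfied by `φ`. -/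
def EdgeSat (φ : PAssign D) (C : Clause D) (v : V) : Prop :=
  ∃ ε, (v, ε) ∈ C.1 ∧ SatLit φ (v, ε)

/-- `φ` is matching-satisfying for `F`: `B_φ(F)` has a matching covering all
clause-nodes. -/
def MatchingSatisfying (φ : PAssign D) (F : Multiset (Clause D)) : Prop :=
  ∃ P : Multiset (Clause D × (V × ℕ)),
    P.map Prod.fst = F ∧ (P.map Prod.snd).Nodup ∧
    ∀ p ∈ P, p.2.2 < (D p.2.1).card - 1 ∧ EdgeSat φ p.1 p.2.1

/-- The maximum size of a matching in `B(F)`. -/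
noncomputable def nu (F : Multiset (Clause D)) : ℕ :=
  sSup { k | ∃ P : Multiset (Clause D × (V × ℕ)),
    P.map Prod.fst ≤ F ∧ (P.map Prod.snd).Nodup ∧
    (∀ p ∈ P, p.2.1 ∈ FinFn.vars p.1 ∧ p.2.2 < (D p.2.1).card - 1) ∧
    Multiset.card P = k }

/-- The maximum size of a matching in `B_φ(F)`. -/
noncomputable def nuSub (φ : PAssign D) (F : Multiset (Clause D)) : ℕ :=
  sSup { k | ∃ P : Multiset (Clause D × (V × ℕ)),
    P.map Prod.fst ≤ F ∧ (P.map Prod.snd).Nodup ∧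
    (∀ p ∈ P, p.2.2 < (D p.2.1).card - 1 ∧ EdgeSat φ p.1 p.2.1) ∧
    Multiset.card P = k }

/-- `φ` is matching-maximum for `F`. -/
noncomputable def MatchingMaximum (φ : PAssign D) (F : Multiset (Clause D)) : Prop :=
  nuSub φ F = nu F

/-- `φ` is an autarky for `F`: every clause touched by `φ` is satisfied by `φ`. -/
def IsAutarky (φ : PAssign D) (F : Multiset (Clause D)) : Prop :=
  ∀ C ∈ F, (FinFn.vars C ∩ FinFn.vars φ).Nonempty → SatClause φ C

/-- `F` is lean: it has no non-trivial autarky. -/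
def IsLean (F : Multiset (Clause D)) : Prop :=
  ¬ ∃ φ : PAssign D, IsAutarky φ F ∧ (FinFn.vars φ ∩ mvars F).Nonempty

/-- The sub-multi-clause-set of clauses touched by the variables in `W`. -/
noncomputable def touchedBy (F : Multiset (Clause D)) (W : Finset V) : Multiset (Clause D) :=
  F.filter (fun C => (FinFn.vars C ∩ W).Nonempty)

/-- The restriction `F[W]`: keep the clauses touching `W` and delete from them all
literals whose variable is not in `W`. -/
noncomputable def restrictTo (F : Multiset (Clause D)) (W : Finset V) : Multiset (Clause D) :=
  (touchedBy F W).map (fun C => FinFn.restrictVars C W)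

/-- `φ` is a matching autarky for `F`: `φ` is matching-satisfying for the
sub-multi-clause-set of clauses touched by `φ`. -/
noncomputable def IsMatchingAutarky (φ : PAssign D) (F : Multiset (Clause D)) : Prop :=
  MatchingSatisfying φ (touchedBy F (FinFn.vars φ))

/-- `F` is matching lean: no non-trivial matching autarky. -/
noncomputable def MatchingLean (F : Multiset (Clause D)) : Prop :=
  ¬ ∃ φ : PAssign D, IsMatchingAutarky φ F ∧ (FinFn.vars φ ∩ mvars F).Nonempty

lemma surp_nonempty {F : Multiset (Clause D)} (h : (mvars F).Nonempty) :
    ((mvars F).powerset.erase ∅).Nonempty := by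
  obtain ⟨v, hv⟩ := h
  refine ⟨{v}, ?_⟩
  simp [Finset.mem_erase, Finset.singleton_subset_iff, hv]

/-- The surplus `surp(F) = min {δ(F[W]) : ∅ ≠ W ⊆ var(F)}` (and `0` if `var(F) = ∅`). -/
noncomputable def surp (F : Multiset (Clause D)) : ℤ :=
  if h : (mvars F).Nonempty then
    ((mvars F).powerset.erase ∅).inf' (surp_nonempty h)
      (fun W => delta (restrictTo F W))
  else 0

/-- The number of occurrences of the literal `l` in `F`. -/
noncomputable def litCount (F : Multiset (Clause D)) (l : V × α) : ℕ :=
  Multiset.card (F.filter (fun C => l ∈ C.1))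

/-- The number of occurrences `#_v(F)` of the variable `v` in `F`. -/
noncomputable def varCount (F : Multiset (Clause D)) (v : V) : ℕ :=
  ∑ ε ∈ D v, litCount F (v, ε)

/-- The partial assignment `⟨v → ε⟩`. -/
def single (v : V) (ε : α) (hε : ε ∈ D v) : PAssign D :=
  ⟨{(v, ε)}, by
    refine ⟨?_, ?_⟩
    · intro p hp
      rw [Finset.mem_singleton] at hp
      subst hp; exact hε
    · intro p hp q hq _
      rw [Finset.mem_singleton] at hp hq
      subst hp; subst hq; rfl⟩

/-- Composition `φ ∘ ψ` of partial assignments: domain is the union of the domains,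
`ψ` taking precedence. -/
def comp (φ ψ : PAssign D) : PAssign D :=
  ⟨ψ.1 ∪ φ.1.filter (fun p => p.1 ∉ FinFn.vars ψ), by
    constructor
    · intro p hp
      rcases Finset.mem_union.mp hp with h | h
      · exact ψ.2.1 p h
      · exact φ.2.1 p (Finset.mem_filter.mp h).1
    · intro p hp q hq hpq
      rcases Finset.mem_union.mp hp with h1 | h1 <;>
        rcases Finset.mem_union.mp hq with h2 | h2
      · exact ψ.2.2 p h1 q h2 hpq
      · exact absurd (hpq ▸ Finset.mem_image_of_mem Prod.fst h1)
          (Finset.mem_filter.mp h2).2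
      · exact absurd (hpq.symm ▸ Finset.mem_image_of_mem Prod.fst h2)
          (Finset.mem_filter.mp h1).2
      · exact φ.2.2 p (Finset.mem_filter.mp h1).1 q (Finset.mem_filter.mp h2).1 hpq⟩

/-- Two clauses clash (in some variable). -/
def Clash (C C' : Clause D) : Prop :=
  ∃ v ε ε', (v, ε) ∈ C.1 ∧ (v, ε') ∈ C'.1 ∧ ε ≠ ε'

/-- The number of variables in which two clauses clash. -/
noncomputable def clashCount (C C' : Clause D) : ℕ :=
  ((FinFn.vars C).filter
    (fun v => ∃ ε ε', (v, ε) ∈ C.1 ∧ (v, ε') ∈ C'.1 ∧ ε ≠ ε')).card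

/-- Hitting clause-sets: every two distinct clauses clash. -/
def Hitting (F : Finset (Clause D)) : Prop :=
  ∀ C ∈ F, ∀ C' ∈ F, C ≠ C' → Clash C C'

/-- Boolean clauses over the boolean variables `V × α` (one boolean variable per
generalised literal; the value `false` gives the positive boolean literal). -/
abbrev BClause (V α : Type) :=
  Clause (fun _ : V × α => (Finset.univ : Finset Bool))

/-- The direct translation of a single clause: each literal `(v,ε)` is replaced by
the positive boolean literal of the boolean variable `(v,ε)`. -/
def dirClause (C : Clause D) : BClause V α :=
  ⟨C.1.image (fun p => (p, false)), by
    constructor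
    · intro p _; exact Finset.mem_univ _
    · intro p hp q hq h
      simp only [Finset.mem_image] at hp hq
      obtain ⟨a, -, rfl⟩ := hp
      obtain ⟨b, -, rfl⟩ := hq
      exact congrArg (fun x => (x, false)) h⟩

/-- The ALO-clause for a variable `v`: the negative boolean literals of the boolean
variables `(v,ε)` for `ε ∈ D v`. -/
def aloClause (D : V → Finset α) (v : V) : BClause V α :=
  ⟨(D v).image (fun ε => ((v, ε), true)), by
    constructor
    · intro p _; exact Finset.mem_univ _
    · intro p hp q hq h
      simp only [Finset.mem_image] at hp hq
      obtain ⟨a, -, rfl⟩ := hp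
      obtain ⟨b, -, rfl⟩ := hq
      exact congrArg (fun x => (x, true)) h⟩

/-- The direct translation `Γ(F)`: the translated clauses together with the
ALO-clauses for all occurring variables. -/
noncomputable def dirTrans (F : Finset (Clause D)) : Finset (BClause V α) :=
  F.image dirClause ∪ (mvars F.val).image (aloClause D)

/-- The copies of the variables in `X`. -/
noncomputable def copies (D : V → Finset α) (X : Finset V) : Finset (V × ℕ) :=
  X.biUnion fun v => ({v} : Finset V) ×ˢ Finset.range ((D v).card - 1)

lemma mem_copies {X : Finset V} {p : V × ℕ} :
    p ∈ copies D X ↔ p.1 ∈ X ∧ p.2 < (D p.1).card - 1 := by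
  unfold copies
  simp only [Finset.mem_biUnion, Finset.mem_product, Finset.mem_singleton, Finset.mem_range]
  constructor
  · rintro ⟨v, hv, h1, h2⟩
    rw [h1]; exact ⟨hv, h2⟩
  · rintro ⟨h1, h2⟩
    exact ⟨p.1, h1, rfl, h2⟩

lemma card_copies (hD : ∀ v, (D v).Nonempty) (X : Finset V) :
    ((copies D X).card : ℤ) = ∑ v ∈ X, ((D v).card - 1 : ℤ) := by
  unfold copies
  rw [Finset.card_biUnion]
  · push_cast
    refine Finset.sum_congr rfl fun v _ => ?_
    have := (hD v).card_pos
    simp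
    omega
  · intro x _ y _ hxy
    refine Finset.disjoint_left.2 ?_
    intro p hp hq
    simp only [Finset.mem_product, Finset.mem_singleton] at hp hq
    exact hxy (hp.1.symm.trans hq.1)

lemma mem_mvars {F : Multiset (Clause D)} {v : V} :
    v ∈ mvars F ↔ ∃ C ∈ F, v ∈ FinFn.vars C := by
  unfold mvars
  simp [Finset.mem_sup]

lemma hall {A B : Type} [DecidableEq B] (F : Finset A) (t : A → Finset B) :
    (∀ s ⊆ F, s.card ≤ (s.biUnion t).card) ↔
      ∃ P : Multiset (A × B), P.map Prod.fst = F.val ∧ (P.map Prod.snd).Nodup ∧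
        ∀ p ∈ P, p.2 ∈ t p.1 := by
  constructor
  · intro h
    have := (Finset.all_card_le_biUnion_card_iff_exists_injective
      (fun a : {a // a ∈ F} => t a.1)).1 (by
        intro s
        have := h (s.map (Function.Embedding.subtype _)) (by
          intro x hx
          simp at hx
          exact hx.1)
        rw [Finset.card_map] at this
        refine this.trans (Finset.card_le_card ?_)
        intro b hb
        simp at hb ⊢
        obtain ⟨a, ⟨ha, has⟩, hb⟩ := hb
        exact ⟨a, ⟨ha, has⟩, hb⟩)
    obtain ⟨f, hf, hft⟩ := this
    refine ⟨F.attach.val.map fun a => (a.1, f a), ?_, ?_, ?_⟩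
    · rw [Multiset.map_map]
      exact Multiset.attach_map_val F.val
    · rw [Multiset.map_map]
      exact Multiset.Nodup.map hf F.attach.nodup
    · intro p hp
      obtain ⟨a, _, rfl⟩ := Multiset.mem_map.1 hp
      exact hft a
  · rintro ⟨P, h1, h2, h3⟩ s hs
    have e : (P.filter (fun p => p.1 ∈ s)).map Prod.fst = s.val := by
      have := Multiset.filter_map (fun a => a ∈ s) Prod.fst P
      rw [h1] at this
      refine Eq.trans this.symm ?_
      have h' : F.filter (fun a => a ∈ s) = s := by
        ext a; simp only [Finset.mem_filter]; exact ⟨fun h => h.2, fun h => ⟨hs h, h⟩⟩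
      exact congrArg Finset.val h'
    have hn : ((P.filter (fun p => p.1 ∈ s)).map Prod.snd).Nodup :=
      Multiset.nodup_of_le (Multiset.map_le_map (Multiset.filter_le _ P)) h2
    have hc : s.card = (⟨_, hn⟩ : Finset B).card := by
      have := congrArg Multiset.card e
      rw [Multiset.card_map] at this
      exact this.symm.trans (Multiset.card_map Prod.snd _).symm
    rw [hc]
    refine Finset.card_le_card ?_
    intro b hb
    obtain ⟨p, hp, rfl⟩ := Multiset.mem_map.1 (Finset.mem_mk.1 hb)
    rw [Multiset.mem_filter] at hp
    exact Finset.mem_biUnion.2 ⟨p.1, hp.2, h3 p hp.1⟩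

lemma biUnion_copies (s : Finset (Clause D)) (U : Finset V) :
    (s.biUnion fun C => copies D (FinFn.vars C \ U)) = copies D (mvars s.val \ U) := by
  ext p
  simp only [Finset.mem_biUnion, mem_copies, Finset.mem_sdiff, mem_mvars]
  constructor
  · rintro ⟨C, hC, ⟨h1, h2⟩, h3⟩
    exact ⟨⟨⟨C, hC, h1⟩, h2⟩, h3⟩
  · rintro ⟨⟨⟨C, hC, h1⟩, h2⟩, h3⟩
    exact ⟨C, hC, ⟨h1, h2⟩, h3⟩

lemma hallU (F : Finset (Clause D)) (U : Finset V) :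
    (∀ s ⊆ F, s.card ≤ (copies D (mvars s.val \ U)).card) ↔
      ∃ P : Multiset (Clause D × (V × ℕ)), P.map Prod.fst = F.val ∧ (P.map Prod.snd).Nodup ∧
        ∀ p ∈ P, (p.2.1 ∈ FinFn.vars p.1 ∧ p.2.1 ∉ U) ∧ p.2.2 < (D p.2.1).card - 1 := by
  have := hall F (fun C => copies D (FinFn.vars C \ U))
  simp only [biUnion_copies, mem_copies, Finset.mem_sdiff] at this
  exact this

lemma delta_eq (hD : ∀ v, (D v).Nonempty) (F : Finset (Clause D)) :
    delta F.val = (F.card : ℤ) - (copies D (mvars F.val)).card := by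
  rw [card_copies hD]; rfl

lemma matchingSat_iff (hD : ∀ v, (D v).Nonempty) (F : Finset (Clause D)) :
    MatchingSat F.val ↔ ∀ s ⊆ F, delta s.val ≤ 0 := by
  have := hallU F ∅
  simp only [Finset.sdiff_empty, Finset.notMem_empty, not_false_eq_true, and_true] at this
  refine Iff.trans this.symm ?_
  refine forall₂_congr fun s _ => ?_
  rw [delta_eq hD]
  omega

lemma mvars_mono {F G : Multiset (Clause D)} (h : ∀ C ∈ F, C ∈ G) : mvars F ⊆ mvars G := by
  intro v
  simp only [mem_mvars]
  rintro ⟨C, hC, hv⟩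
  exact ⟨C, h C hC, hv⟩

lemma copies_mono {X Y : Finset V} (h : X ⊆ Y) : copies D X ⊆ copies D Y := by
  intro p
  simp only [mem_copies]
  exact fun hp => ⟨h hp.1, hp.2⟩

lemma card_copies_sdiff (X Y : Finset V) :
    (copies D (X ∪ Y)).card = (copies D X).card + (copies D (Y \ X)).card := by
  rw [← Finset.card_union_of_disjoint]
  · congr 1
    ext p
    simp only [Finset.mem_union, mem_copies, Finset.mem_sdiff]
    tauto
  · rw [Finset.disjoint_left]
    intro p
    simp only [mem_copies, Finset.mem_sdiff]
    tauto

lemma exists_value (hD : ∀ v, (D v).Nonempty) (P : Multiset (Clause D × (V × ℕ)))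
    (hP : (P.map Prod.snd).Nodup) (hlt : ∀ p ∈ P, p.2.2 < (D p.2.1).card - 1) (v : V) :
    ∃ ε ∈ D v, ∀ p ∈ P, p.2.1 = v → (v, ε) ∉ p.1.1 := by
  by_contra hcon
  push Not at hcon
  have : Nonempty (Clause D × (V × ℕ)) := ⟨(⟨∅, by simp⟩, v, 0)⟩
  choose! f hf1 hf2 hf3 using hcon
  have hle : (D v).card ≤ (Finset.range ((D v).card - 1)).card := by
    refine Finset.card_le_card_of_injOn (fun ε => (f ε).2.2) ?_ ?_
    · intro ε hε
      have := hlt _ (hf1 ε hε)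
      rw [hf2 ε hε] at this
      simpa using this
    · intro a ha b hb hab
      have h2 : (f a).2 = (f b).2 :=
        Prod.ext ((hf2 a ha).trans (hf2 b hb).symm) hab
      have h1 : f a = f b :=
        Multiset.inj_on_of_nodup_map hP _ (hf1 a ha) _ (hf1 b hb) h2
      have ha' := hf3 a ha
      rw [h1] at ha'
      exact congrArg Prod.snd ((f b).1.2.2 _ ha' _ (hf3 b hb) rfl)
  rw [Finset.card_range] at hle
  have := (hD v).card_pos
  omega

lemma forward (hD : ∀ v, (D v).Nonempty) (F : Finset (Clause D))
    (hl : MatchingLean F.val) (hd : delta F.val = 1) :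
    ∀ G ⊂ F, delta G.val ≤ 0 := by
  by_contra hcon
  push Not at hcon
  obtain ⟨G0, hG0, hG0d⟩ := hcon
  obtain ⟨G, hG, hmax⟩ := Finset.exists_max_image F.ssubsets (fun G => delta G.val)
    ⟨G0, Finset.mem_ssubsets.2 hG0⟩
  rw [Finset.mem_ssubsets] at hG
  have hG1 : 1 ≤ delta G.val := by
    have := hmax G0 (Finset.mem_ssubsets.2 hG0)
    omega
  have hmax' : ∀ H ⊆ F, delta H.val ≤ delta G.val := by
    intro H hH
    rcases hH.eq_or_ssubset with rfl | h
    · omega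
    · exact hmax H (Finset.mem_ssubsets.2 h)
  have hH : ∀ s ⊆ F \ G, s.card ≤ (copies D (mvars s.val \ mvars G.val)).card := by
    intro s hs
    have h1 := hmax' (G ∪ s) (Finset.union_subset hG.1 (hs.trans Finset.sdiff_subset))
    rw [delta_eq hD, delta_eq hD, Finset.card_union_of_disjoint
      (Finset.disjoint_of_subset_right hs Finset.disjoint_sdiff)] at h1
    have h2 : mvars (G ∪ s).val = mvars G.val ∪ mvars s.val := by
      ext v
      simp only [mem_mvars, Finset.mem_union, Finset.mem_val]
      constructor
      · rintro ⟨C, hC | hC, hv⟩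
        · exact Or.inl ⟨C, hC, hv⟩
        · exact Or.inr ⟨C, hC, hv⟩
      · rintro (⟨C, hC, hv⟩ | ⟨C, hC, hv⟩)
        · exact ⟨C, Or.inl hC, hv⟩
        · exact ⟨C, Or.inr hC, hv⟩
    rw [h2, card_copies_sdiff] at h1
    push_cast at h1
    omega
  obtain ⟨P, hP1, hP2, hP3⟩ := (hallU _ _).1 hH
  choose val hval1 hval2 using exists_value hD P hP2 (fun p hp => (hP3 p hp).2)
  set W := mvars F.val \ mvars G.val with hW
  have hPW : ∀ p ∈ P, p.2.1 ∈ W := by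
    intro p hp
    refine Finset.mem_sdiff.2 ⟨mem_mvars.2 ⟨p.1, ?_, (hP3 p hp).1.1⟩, (hP3 p hp).1.2⟩
    have : p.1 ∈ P.map Prod.fst := Multiset.mem_map_of_mem _ hp
    rw [hP1] at this
    exact Finset.sdiff_subset this
  let φ : PAssign D := ⟨W.image fun v => (v, val v), by
    constructor
    · intro p hp
      obtain ⟨v, _, rfl⟩ := Finset.mem_image.1 hp
      exact hval1 v
    · intro p hp q hq h
      obtain ⟨v, _, rfl⟩ := Finset.mem_image.1 hp
      obtain ⟨w, _, rfl⟩ := Finset.mem_image.1 hq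
      simp only at h
      rw [h]⟩
  have hφ : FinFn.vars φ = W := by
    ext v
    simp [FinFn.vars, φ]
  refine hl ⟨φ, ?_, ?_⟩
  · unfold IsMatchingAutarky MatchingSatisfying
    rw [hφ]
    refine ⟨P.filter (fun p => (FinFn.vars p.1 ∩ W).Nonempty), ?_, ?_, ?_⟩
    · have := Multiset.filter_map (fun C => (FinFn.vars C ∩ W).Nonempty) Prod.fst P
      rw [hP1] at this
      refine Eq.trans this.symm ?_
      unfold touchedBy
      have h' : (F \ G).filter (fun C => (FinFn.vars C ∩ W).Nonempty)
          = F.filter (fun C => (FinFn.vars C ∩ W).Nonempty) := by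
        ext C
        simp only [Finset.mem_filter, Finset.mem_sdiff]
        constructor
        · rintro ⟨⟨h1, h2⟩, h3⟩
          exact ⟨h1, h3⟩
        · rintro ⟨h1, h3⟩
          refine ⟨⟨h1, fun h2 => ?_⟩, h3⟩
          obtain ⟨v, hv⟩ := h3
          rw [Finset.mem_inter, hW, Finset.mem_sdiff] at hv
          exact hv.2.2 (mem_mvars.2 ⟨C, h2, hv.1⟩)
      exact congrArg Finset.val h'
    · exact Multiset.nodup_of_le (Multiset.map_le_map (Multiset.filter_le _ P)) hP2
    · intro p hp
      have hp := (Multiset.mem_filter.1 hp).1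
      refine ⟨(hP3 p hp).2, ?_⟩
      obtain ⟨l, hl, hl1⟩ := Finset.mem_image.1 (hP3 p hp).1.1
      have hl' : (p.2.1, l.2) ∈ p.1.1 := by rw [← hl1]; exact hl
      refine ⟨l.2, hl', val p.2.1, Finset.mem_image.2 ⟨p.2.1, hPW p hp, rfl⟩, ?_⟩
      intro he
      simp only at he
      refine hval2 p.2.1 p hp rfl ?_
      rw [he]; exact hl'
  · rw [hφ]
    obtain ⟨C, hC, hCG⟩ := Finset.exists_of_ssubset hG
    have : C ∈ P.map Prod.fst := by
      rw [hP1]; exact Finset.mem_sdiff.2 ⟨hC, hCG⟩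
    obtain ⟨p, hp, rfl⟩ := Multiset.mem_map.1 this
    exact ⟨p.2.1, Finset.mem_inter.2 ⟨hPW p hp, (Finset.mem_sdiff.1 (hPW p hp)).1⟩⟩

lemma backward (F : Finset (Clause D))
    (hn : ¬ MatchingSat F.val) (hm : ∀ F' ⊂ F, MatchingSat F'.val) :
    MatchingLean F.val := by
  rintro ⟨φ, ⟨P, hP1, hP2, hP3⟩, v, hv⟩
  rw [Finset.mem_inter] at hv
  obtain ⟨C, hC, hvC⟩ := mem_mvars.1 hv.2
  obtain ⟨Q, hQ1, hQ2, hQ3⟩ := hm (F.filter (fun C => ¬ (FinFn.vars C ∩ FinFn.vars φ).Nonempty))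
    (Finset.filter_ssubset.2 ⟨C, hC, not_not.2 ⟨v, Finset.mem_inter.2 ⟨hvC, hv.1⟩⟩⟩)
  refine hn ⟨P + Q, ?_, ?_, ?_⟩
  · rw [Multiset.map_add, hP1, hQ1]
    exact Multiset.filter_add_not _ _
  · rw [Multiset.map_add]
    refine (Multiset.Nodup.add_iff hP2 hQ2).2 ?_
    rw [Multiset.disjoint_left]
    intro b hb hb'
    obtain ⟨p, hp, rfl⟩ := Multiset.mem_map.1 hb
    obtain ⟨q, hq, hqp⟩ := Multiset.mem_map.1 hb'
    obtain ⟨_, ε, h1, ε', h2, h3⟩ := hP3 p hp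
    have hvφ : p.2.1 ∈ FinFn.vars φ := Finset.mem_image.2 ⟨_, h2, rfl⟩
    have hq1 : q.1 ∈ Q.map Prod.fst := Multiset.mem_map_of_mem _ hq
    rw [hQ1] at hq1
    refine (Finset.mem_filter.1 hq1).2 ⟨p.2.1, Finset.mem_inter.2 ⟨?_, hvφ⟩⟩
    rw [← hqp]; exact (hQ3 q hq).1
  · intro p hp
    rcases Multiset.mem_add.1 hp with hp | hp
    · obtain ⟨h0, ε, h1, _⟩ := hP3 p hp
      exact ⟨Finset.mem_image.2 ⟨_, h1, rfl⟩, h0⟩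
    · exact hQ3 p hp

/-- a generalised clause-set is matching lean with `δ(F) = 1` iff it
is minimally matching unsatisfiable (not matching satisfiable, while every proper
subset is matching satisfiable). -/
theorem matchingLean_deficiency_one_iff_min_matching_unsat
    (hD : ∀ v, (D v).Nonempty) (F : Finset (Clause D)) :
    (MatchingLean F.val ∧ delta F.val = 1) ↔
      (¬ MatchingSat F.val ∧ ∀ F' ⊂ F, MatchingSat F'.val) := by
  constructor
  · rintro ⟨hl, hd⟩
    have hf := forward hD F hl hd
    refine ⟨fun h => ?_, fun F' hF' => (matchingSat_iff hD F').2 fun s hs =>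
      hf s (Finset.ssubset_of_subset_of_ssubset hs hF')⟩
    have := (matchingSat_iff hD F).1 h F subset_rfl
    omega
  · rintro ⟨hn, hm⟩
    refine ⟨backward F hn hm, ?_⟩
    have hF : ¬ delta F.val ≤ 0 := by
      intro h0
      refine hn ((matchingSat_iff hD F).2 fun s hs => ?_)
      rcases hs.eq_or_ssubset with rfl | h
      · exact h0
      · exact (matchingSat_iff hD s).1 (hm s h) s subset_rfl
    have hne : F.Nonempty := by
      rw [Finset.nonempty_iff_ne_empty]
      rintro rfl
      exact hn ⟨0, by simp⟩
    obtain ⟨C, hC⟩ := hne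
    have h1 := (matchingSat_iff hD _).1 (hm _ (Finset.erase_ssubset hC)) _ subset_rfl
    rw [delta_eq hD, Finset.card_erase_of_mem hC] at h1
    have h2 := Finset.card_le_card (copies_mono (D := D)
      (mvars_mono (F := (F.erase C).val) (G := F.val) fun x hx => Finset.erase_subset C F hx))
    have h3 : 0 < F.card := Finset.card_pos.2 ⟨C, hC⟩
    rw [delta_eq hD] at hF ⊢
    omega

end GCLS
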